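/- Let n ≥ 1 and let R = ℂ[x_1, y_1, …, x_n, y_n] carry the 𝔖_n-action permuting the pairs of variables (x_i, y_i). Let J ⊆ R be an 𝔖_n-stable ideal such that the quotient R/J, with its induced 𝔖_n-action, is isomorphic as a representation of 𝔖_n (equivalently, as a module over the group algebra ℂ[𝔖_n]) to the regular representation ℂ[𝔖_n]. Then for every 0 ≤ k ≤ n, the inclusion ℂ[x_1, y_1, …, x_k, y_k] ↪ R induces a ℂ-algebra isomorphism ℂ[x_1, y_1, …, x_k, y_k] / ( J ∩ ℂ[x_1, y_1, …, x_k, y_k] ) ≅ ( R/J )^{𝔖_{n−k}}, where 𝔖_{n−k} ⊆ 𝔖_n is the subgroup of permutations fixing 1, …, k (so permuting only the indices k+1, …, n). -/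

import Mathlib

/-!
Write `A = R/J` and let `B k ⊆ A` be the subalgebra generated by the classes of the variables
`x_i, y_i` with `i < k`. It is the image of `ℂ[x_1, y_1, …, x_k, y_k]`, so the content of the
theorem is that every element of `A` fixed by `𝔖_{n-k}` lies in `B k`.

The regular representation contains the trivial one exactly once, so every `𝔖_n`-invariant of `A`
is a scalar (`regular_invariants`). The claim `A^{𝔖_{n-k}} ⊆ B k` then follows by downward
induction on `k` (`mem_varAlg_of_invariant`). For `k = n` it holds because `B n = A`. If it holds
for `k + 1` and `a` is fixed by `𝔖_{n-k}`, then `a ∈ B (k+1)` is a sum of products `c * u` with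
`c ∈ B k` and `u` a polynomial in the next pair of variables `z_p`, `p` being the index `k`.
Summing over the permutations `swap p j`, `j ≥ k` (the identity for `j = p`), multiplies `a` by `n - k` and sends `c * u` to
`c * ∑_{j ≥ k} u(z_j)`. The last sum is the difference of `∑_j u(z_j)`, an `𝔖_n`-invariant and
hence a scalar, and `∑_{j < k} u(z_j) ∈ B k`.
-/

open MvPolynomial

/-- The `𝔖_n`-action on the variables of `ℂ[x_1, y_1, …, x_n, y_n]`: the permutation `σ`
sends the variable `x_i` (indexed by `(i, 0)`) to `x_{σ i}` and `y_i` (indexed by `(i, 1)`)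
to `y_{σ i}`. -/
def permVar {n : ℕ} (σ : Equiv.Perm (Fin n)) : Fin n × Fin 2 → Fin n × Fin 2 :=
  fun p => (σ p.1, p.2)

/-- The inclusion `ℂ[x_1, y_1, …, x_k, y_k] ↪ ℂ[x_1, y_1, …, x_n, y_n]` for `k ≤ n`. -/
noncomputable def inclPoly {n k : ℕ} (hk : k ≤ n) :
    MvPolynomial (Fin k × Fin 2) ℂ →ₐ[ℂ] MvPolynomial (Fin n × Fin 2) ℂ :=
  MvPolynomial.rename fun p => (Fin.castLE hk p.1, p.2)

section Abstract

variable {n : ℕ} {A : Type*} [CommRing A] [Algebra ℂ A]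

/-- The subalgebra `B k` of `A` generated by the elements `z (i, t)` with `i < k`. -/
def varAlg (z : Fin n × Fin 2 → A) (k : ℕ) : Subalgebra ℂ A :=
  Algebra.adjoin ℂ (z '' {p | (p.1 : ℕ) < k})

/-- The subalgebra of `A` generated by the single pair `z (i, 0)`, `z (i, 1)`. -/
def pairAlg (z : Fin n × Fin 2 → A) (i : Fin n) : Subalgebra ℂ A :=
  Algebra.adjoin ℂ (Set.range fun t => z (i, t))

/-- The set of indices `j ∈ {0, …, n-1}` with `k ≤ j`. -/
def idxGE (n k : ℕ) : Finset (Fin n) :=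
  Finset.univ.filter fun j => k ≤ (j : ℕ)

variable (act : Equiv.Perm (Fin n) →* (A →ₐ[ℂ] A)) (z : Fin n × Fin 2 → A)
  (hact : ∀ σ p, act σ (z p) = z (permVar σ p))

include hact

lemma act_varAlg {k : ℕ} {σ : Equiv.Perm (Fin n)} (hσ : ∀ i : Fin n, (i : ℕ) < k → σ i = i)
    {c : A} (hc : c ∈ varAlg z k) : act σ c = c := by
  have h : varAlg z k ≤ AlgHom.equalizer (act σ) (AlgHom.id ℂ A) := by
    refine Algebra.adjoin_le ?_
    rintro _ ⟨p, hp, rfl⟩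
    have : permVar σ p = p := Prod.ext (hσ p.1 hp) rfl
    simp [hact, this]
  exact h hc

lemma act_pairAlg {i : Fin n} {σ τ : Equiv.Perm (Fin n)} (hστ : σ i = τ i)
    {u : A} (hu : u ∈ pairAlg z i) : act σ u = act τ u := by
  have h : pairAlg z i ≤ AlgHom.equalizer (act σ) (act τ) := by
    refine Algebra.adjoin_le ?_
    rintro _ ⟨t, rfl⟩
    simp [hact, permVar, hστ]
  exact h hu

lemma act_pairAlg_mem {k : ℕ} {i : Fin n} {σ : Equiv.Perm (Fin n)} (hσ : ((σ i : Fin n) : ℕ) < k)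
    {u : A} (hu : u ∈ pairAlg z i) : act σ u ∈ varAlg z k := by
  have h : pairAlg z i ≤ (varAlg z k).comap (act σ) := by
    refine Algebra.adjoin_le ?_
    rintro _ ⟨t, rfl⟩
    change act σ (z (i, t)) ∈ varAlg z k
    rw [hact]
    exact Algebra.subset_adjoin ⟨_, hσ, rfl⟩
  exact h hu

/-- The power-sum step: `∑_{j ≥ k} u(z_j)` lies in `B k`, because `∑_j u(z_j)` over all `j` is
`𝔖_n`-invariant, hence a scalar. -/
lemma sum_swap_pairAlg_mem (hinv : ∀ a : A, (∀ σ, act σ a = a) → a ∈ (⊥ : Subalgebra ℂ A))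
    {k : ℕ} (p : Fin n) {u : A} (hu : u ∈ pairAlg z p) :
    ∑ j ∈ idxGE n k, act (Equiv.swap p j) u ∈ varAlg z k := by
  have hall : ∑ j : Fin n, act (Equiv.swap p j) u ∈ varAlg z k := by
    refine (bot_le : ⊥ ≤ varAlg z k) (hinv _ fun σ => ?_)
    rw [map_sum, ← Equiv.sum_comp σ fun j => act (Equiv.swap p j) u]
    refine Finset.sum_congr rfl fun j _ => ?_
    rw [← AlgHom.mul_apply, ← map_mul]
    exact act_pairAlg act z hact (by simp) hu
  have hlow : ∑ j ∈ Finset.univ.filter fun j : Fin n => ¬ k ≤ (j : ℕ), act (Equiv.swap p j) u ∈ varAlg z k := by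
    refine Subalgebra.sum_mem _ fun j hj => act_pairAlg_mem act z hact ?_ hu
    simpa using hj
  rw [← Finset.sum_filter_add_sum_filter_not _ fun j : Fin n => k ≤ (j : ℕ)] at hall
  exact (add_mem_cancel_right hlow).1 hall

omit hact in
lemma varAlg_succ_le (p : Fin n) :
    varAlg z (p + 1) ≤ varAlg z p ⊔ pairAlg z p := by
  rw [varAlg, varAlg, pairAlg, ← Algebra.adjoin_union]
  refine Algebra.adjoin_mono ?_
  rintro _ ⟨⟨i, t⟩, hi, rfl⟩
  rcases Nat.lt_succ_iff_lt_or_eq.1 hi with h | h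
  · exact Or.inl ⟨_, h, rfl⟩
  · obtain rfl : i = p := Fin.ext h
    exact Or.inr ⟨t, rfl⟩

/-- The operator `∑_{j ≥ p} swap p j` maps `B (p+1)` into `B p`: it is linear over `B p`, and
`B (p+1)` is spanned over `B p` by the polynomials in `z (p, 0)`, `z (p, 1)`. -/
lemma sum_swap_mem (hinv : ∀ a : A, (∀ σ, act σ a = a) → a ∈ (⊥ : Subalgebra ℂ A))
    (p : Fin n) {a : A} (ha : a ∈ varAlg z (p + 1)) :
    ∑ j ∈ idxGE n p, act (Equiv.swap p j) a ∈ varAlg z p := by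
  have ha' : a ∈ Subalgebra.toSubmodule (varAlg z p) * Subalgebra.toSubmodule (pairAlg z p) := by
    rw [Subalgebra.mul_toSubmodule]
    exact varAlg_succ_le z p ha
  clear ha
  induction ha' using Submodule.mul_induction_on' with
  | mem_mul_mem c hc u hu =>
    have : ∑ j ∈ idxGE n p, act (Equiv.swap p j) (c * u)
        = c * ∑ j ∈ idxGE n p, act (Equiv.swap p j) u := by
      rw [Finset.mul_sum]
      refine Finset.sum_congr rfl fun j hj => ?_
      rw [map_mul, act_varAlg act z hact (fun i hi => ?_) hc]
      refine Equiv.swap_apply_of_ne_of_ne (fun h => ?_) (fun h => ?_)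
      · simp [h] at hi
      · have := (Finset.mem_filter.1 hj).2
        rw [h] at hi
        omega
    rw [this]
    exact mul_mem hc (sum_swap_pairAlg_mem act z hact hinv p hu)
  | add x _ y _ hx hy =>
    simp only [map_add, Finset.sum_add_distrib]
    exact add_mem hx hy

/-- If all `𝔖_n`-invariants of `A` are scalars and the `z (i, t)` generate `A`, then the elements
fixed by all permutations fixing the indices `< k` are polynomials in the `z (i, t)`, `i < k`. -/
theorem mem_varAlg_of_invariant
    (hinv : ∀ a : A, (∀ σ, act σ a = a) → a ∈ (⊥ : Subalgebra ℂ A))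
    (hgen : varAlg z n = ⊤) {k : ℕ} (hk : k ≤ n) :
    ∀ a : A, (∀ σ : Equiv.Perm (Fin n), (∀ i : Fin n, (i : ℕ) < k → σ i = i) → act σ a = a) →
      a ∈ varAlg z k := by
  induction hk using Nat.decreasingInduction with
  | self => intro a _; rw [hgen]; exact Algebra.mem_top
  | of_succ k hk ih =>
    intro a ha
    have h1 := sum_swap_mem act z hact hinv ⟨k, hk⟩
      (ih a fun σ hσ => ha σ fun i hi => hσ i (Nat.lt_succ_of_lt hi))
    have h2 : ∑ j ∈ idxGE n k, act (Equiv.swap ⟨k, hk⟩ j) a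
        = ((idxGE n k).card : ℂ) • a := by
      rw [Nat.cast_smul_eq_nsmul, ← Finset.sum_const]
      refine Finset.sum_congr rfl fun j hj => ha _ fun i hi => ?_
      refine Equiv.swap_apply_of_ne_of_ne (fun h => ?_) (fun h => ?_)
      · simp [h] at hi
      · have := (Finset.mem_filter.1 hj).2
        rw [h] at hi
        omega
    have h3 : ((idxGE n k).card : ℂ) ≠ 0 :=
      Nat.cast_ne_zero.2 (Finset.card_ne_zero_of_mem (a := ⟨k, hk⟩) (by simp [idxGE]))
    change ∑ j ∈ idxGE n k, act (Equiv.swap ⟨k, hk⟩ j) a ∈ varAlg z k at h1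
    rw [h2] at h1
    simpa [smul_smul, inv_mul_cancel₀ h3] using Subalgebra.smul_mem _ h1
      ((idxGE n k).card : ℂ)⁻¹

end Abstract

/-- An invariant vector of the regular representation has constant coefficients. -/
lemma regular_invariants {G : Type*} [Group G] {v : MonoidAlgebra ℂ G}
    (hv : ∀ g, MonoidAlgebra.of ℂ G g * v = v) (g : G) : v.coeff g = v.coeff 1 := by
  have h := congrArg (fun w => w.coeff g) (hv g)
  simpa [MonoidAlgebra.of_apply, MonoidAlgebra.coeff_single_mul_apply] using h.symm

section Quotient

variable {n : ℕ} (J : Ideal (MvPolynomial (Fin n × Fin 2) ℂ))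
  (hstable : ∀ σ : Equiv.Perm (Fin n), ∀ f ∈ J, MvPolynomial.rename (permVar σ) f ∈ J)

/-- The action of `𝔖_n` on `R/J` by `ℂ`-algebra endomorphisms. -/
noncomputable def quotAct :
    Equiv.Perm (Fin n) →* ((MvPolynomial (Fin n × Fin 2) ℂ ⧸ J) →ₐ[ℂ]
      (MvPolynomial (Fin n × Fin 2) ℂ ⧸ J)) where
  toFun σ := Ideal.quotientMapₐ J (MvPolynomial.rename (permVar σ)) (hstable σ)
  map_one' := by
    refine Ideal.Quotient.algHom_ext _ ?_
    ext p
    change Ideal.Quotient.mk J (rename (permVar 1) (X p)) = Ideal.Quotient.mk J (X p)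
    simp [permVar]
  map_mul' σ τ := by
    refine Ideal.Quotient.algHom_ext _ ?_
    ext p
    change Ideal.Quotient.mk J (rename (permVar (σ * τ)) (X p))
      = Ideal.Quotient.mk J (rename (permVar σ) (rename (permVar τ) (X p)))
    simp [permVar]

lemma quotAct_mk (σ : Equiv.Perm (Fin n)) (f : MvPolynomial (Fin n × Fin 2) ℂ) :
    quotAct J hstable σ (Ideal.Quotient.mk J f)
      = Ideal.Quotient.mk J (MvPolynomial.rename (permVar σ) f) := rfl

end Quotient

/-- Let `R = ℂ[x_1, y_1, …, x_n, y_n]` carry the `𝔖_n`-action permuting the pairs of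
variables `(x_i, y_i)`, and let `J ⊆ R` be an `𝔖_n`-stable ideal such that `R/J`, with
its induced `𝔖_n`-action, is isomorphic as a representation of `𝔖_n` to the regular
representation `ℂ[𝔖_n]`. Then, for every `0 ≤ k ≤ n`, the inclusion
`ℂ[x_1, y_1, …, x_k, y_k] ↪ R` induces a `ℂ`-algebra isomorphism
`ℂ[x_1, y_1, …, x_k, y_k] / (J ∩ ℂ[x_1, y_1, …, x_k, y_k]) ≅ (R/J)^{𝔖_{n-k}}`,
where `𝔖_{n-k} ⊆ 𝔖_n` is the subgroup of permutations fixing `1, …, k`. -/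
theorem quotient_iso_invariants (n k : ℕ) (hn : 1 ≤ n) (hk : k ≤ n)
    (J : Ideal (MvPolynomial (Fin n × Fin 2) ℂ))
    (hstable : ∀ σ : Equiv.Perm (Fin n), ∀ f ∈ J, MvPolynomial.rename (permVar σ) f ∈ J)
    (hreg : ∃ θ : (MvPolynomial (Fin n × Fin 2) ℂ ⧸ J) ≃ₗ[ℂ]
        MonoidAlgebra ℂ (Equiv.Perm (Fin n)),
      ∀ (σ : Equiv.Perm (Fin n)) (f : MvPolynomial (Fin n × Fin 2) ℂ),
        θ (Ideal.Quotient.mk J (MvPolynomial.rename (permVar σ) f))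
          = MonoidAlgebra.of ℂ (Equiv.Perm (Fin n)) σ * θ (Ideal.Quotient.mk J f)) :
    ∃ e : (MvPolynomial (Fin k × Fin 2) ℂ ⧸ Ideal.comap (inclPoly hk) J)
        →ₐ[ℂ] (MvPolynomial (Fin n × Fin 2) ℂ ⧸ J),
      (∀ f : MvPolynomial (Fin k × Fin 2) ℂ,
        e (Ideal.Quotient.mk (Ideal.comap (inclPoly hk) J) f)
          = Ideal.Quotient.mk J (inclPoly hk f))
      ∧ Function.Injective e
      ∧ Set.range e = {q : MvPolynomial (Fin n × Fin 2) ℂ ⧸ J |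
          ∀ σ : Equiv.Perm (Fin n), (∀ i : Fin n, (i : ℕ) < k → σ i = i) →
          ∀ f : MvPolynomial (Fin n × Fin 2) ℂ, Ideal.Quotient.mk J f = q →
            Ideal.Quotient.mk J (MvPolynomial.rename (permVar σ) f) = q} := by
  obtain ⟨θ, hθ⟩ := hreg
  set z : Fin n × Fin 2 → MvPolynomial (Fin n × Fin 2) ℂ ⧸ J :=
    fun p => Ideal.Quotient.mk J (X p) with hz
  have hact : ∀ σ p, quotAct J hstable σ (z p) = z (permVar σ p) := fun σ p => by
    simp [hz, quotAct_mk]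
  have hθ' : ∀ σ a, θ (quotAct J hstable σ a) = MonoidAlgebra.of ℂ _ σ * θ a := by
    intro σ a
    obtain ⟨f, rfl⟩ := Ideal.Quotient.mk_surjective a
    exact hθ σ f
  have hinv : ∀ a, (∀ σ, quotAct J hstable σ a = a) →
      a ∈ (⊥ : Subalgebra ℂ (MvPolynomial (Fin n × Fin 2) ℂ ⧸ J)) := by
    intro a ha
    have h1 := regular_invariants (v := θ 1) fun σ => by rw [← hθ', map_one]
    have ha' := regular_invariants (v := θ a) fun σ => by rw [← hθ', ha]
    -- Both `θ a` and `θ 1` are constant functions, and `θ 1` vanishes only if `R/J = 0`.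
    by_cases h0 : (θ 1).coeff 1 = 0
    · have h10 : (1 : MvPolynomial (Fin n × Fin 2) ℂ ⧸ J) = 0 := by
        refine θ.injective ?_
        rw [map_zero]
        ext σ
        rw [h1, h0]
        rfl
      have : a = 0 := by rw [← mul_one a, h10, mul_zero]
      rw [this]
      exact zero_mem _
    · refine Algebra.mem_bot.2 ⟨(θ a).coeff 1 / (θ 1).coeff 1, ?_⟩
      rw [Algebra.algebraMap_eq_smul_one]
      refine θ.injective ?_
      rw [map_smul]
      ext σ
      change _ * (θ 1).coeff σ = _
      rw [h1 σ, ha' σ, div_mul_cancel₀ _ h0]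
  have hrange : ∀ m (hm : m ≤ n), varAlg z m
      = ((Ideal.Quotient.mkₐ ℂ J).comp (inclPoly hm)).range := by
    intro m hm
    rw [varAlg, ← Algebra.map_top, ← MvPolynomial.adjoin_range_X, AlgHom.map_adjoin]
    congr 1
    ext q
    constructor
    · rintro ⟨⟨i, t⟩, hi, rfl⟩
      exact ⟨_, ⟨(⟨i, hi⟩, t), rfl⟩, by simp [inclPoly, hz]⟩
    · rintro ⟨_, ⟨⟨i, t⟩, rfl⟩, rfl⟩
      exact ⟨(Fin.castLE hm i, t), i.2, by simp [inclPoly, hz]⟩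
  have hgen : varAlg z n = ⊤ := by
    rw [hrange n le_rfl, AlgHom.range_eq_top]
    have : inclPoly (le_refl n) = AlgHom.id ℂ _ := by ext p; simp [inclPoly]
    rw [this]
    exact Ideal.Quotient.mk_surjective
  refine ⟨Ideal.quotientMapₐ J (inclPoly hk) le_rfl, fun f => rfl,
    Ideal.quotientMap_injective, ?_⟩
  have hr : Set.range (Ideal.quotientMapₐ J (inclPoly hk) le_rfl) = varAlg z k := by
    rw [hrange k hk]
    ext q
    constructor
    · rintro ⟨a, rfl⟩
      obtain ⟨f, rfl⟩ := Ideal.Quotient.mk_surjective a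
      exact ⟨f, rfl⟩
    · rintro ⟨f, rfl⟩
      exact ⟨Ideal.Quotient.mk _ f, rfl⟩
  rw [hr]
  ext q
  constructor
  · rintro hq σ hσ f rfl
    exact act_varAlg (quotAct J hstable) z hact hσ hq
  · intro hq
    refine mem_varAlg_of_invariant (quotAct J hstable) z hact hinv hgen hk q fun σ hσ => ?_
    obtain ⟨f, rfl⟩ := Ideal.Quotient.mk_surjective q
    exact hq σ hσ f rfl
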